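/- Let m ≥ 1 and let η_1, …, η_m : ℤ → ℝ be sequences such that for every j with 1 ≤ j ≤ m the Δ-Wronskian W_j^Δ(η_1,…,η_j)(n) is nonzero for all n ∈ ℤ. Define T_0 = id and, inductively, φ_j := T_{j−1}(η_j) and T_j := T_d(φ_j)∘T_{j−1}. Then the product of the successive transformed eigenfunctions equals the Δ-Wronskian: for all n ∈ ℤ, φ_1(n)·φ_2(n)·…·φ_m(n) = W_m^Δ(η_1,…,η_m)(n). (This encodes the transformation rule τ^{(m)}_Δ = W_m^Δ(η_1,…,η_m)·τ_Δ of the τ-function under the m-step gauge transformation, since each single step multiplies the τ-function by the generating eigenfunction.) -/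

import Mathlib

/-- Difference operator: `(Δ f) n = f (n+1) - f n`. -/
def deltaOp (f : ℤ → ℝ) : ℤ → ℝ := fun n => f (n + 1) - f n

/-- Difference-type gauge transformation operator `T_d(q) = Λ(q)∘Δ∘q⁻¹`:
`(T_d(q)f)(n) = q(n+1)·(Δ(f/q))(n)`. -/
noncomputable def Td (q f : ℤ → ℝ) : ℤ → ℝ := fun n => q (n + 1) * deltaOp (fun m => f m / q m) n

/-- Δ-Wronskian `W_k^Δ(f_1,…,f_k)(n) = det[(Δ^{i−1} f_j)(n)]_{1≤i,j≤k}`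
(here `i j : Fin k` are 0-based, so rows are `Δ^i` and columns the functions). -/
noncomputable def Wr {k : ℕ} (η : Fin k → ℤ → ℝ) (n : ℤ) : ℝ :=
  (Matrix.of fun i j : Fin k => (deltaOp^[(i : ℕ)] (η j)) n).det

/-- Iterated gauge transformation: `T_0 = id` and `T_{j+1} = T_d(T_j(η_{j+1}))∘T_j`,
where `η 0, η 1, …` are the generating sequences `η_1, η_2, …` (0-based indexing). -/
noncomputable def Titer (η : ℕ → ℤ → ℝ) : ℕ → (ℤ → ℝ) → (ℤ → ℝ)
  | 0 => id
  | j + 1 => Td (Titer η j (η j)) ∘ Titer η j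

/-!
Each `T_i` is a monic difference operator of order `i`, because `T_d(q) f` at `n` equals
`f (n + 1) - q (n + 1) / q n * f n` and the shift is `Δ + 1`. Hence the matrix `(T_i η_j)(n)` is a
unitriangular matrix times the Wronskian matrix, so its determinant is `W_m^Δ`. On the other hand
`T_d(q) q = 0` makes this matrix upper triangular, with diagonal `φ_1, …, φ_m`. The same identity
for smaller `m` turns nonvanishing of the Wronskians into nonvanishing of the `φ_j`.
-/

open Polynomial

lemma Td_apply_of_ne_zero {q : ℤ → ℝ} (hq : ∀ n, q n ≠ 0) (f : ℤ → ℝ) (n : ℤ) :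
    Td q f n = f (n + 1) - q (n + 1) / q n * f n := by
  have hn := hq n
  have hn' := hq (n + 1)
  simp only [Td, deltaOp]
  field_simp

lemma Td_zero (q : ℤ → ℝ) : Td q 0 = 0 := by
  ext n
  simp [Td, deltaOp]

lemma Td_self {q : ℤ → ℝ} (hq : ∀ n, q n ≠ 0) : Td q q = 0 := by
  ext n
  simp [Td_apply_of_ne_zero hq, hq n]

lemma Titer_succ (η : ℕ → ℤ → ℝ) (i : ℕ) (f : ℤ → ℝ) :
    Titer η (i + 1) f = Td (Titer η i (η i)) (Titer η i f) := rfl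

lemma Titer_eq_zero_of_lt {η : ℕ → ℤ → ℝ} {i j : ℕ} (hji : j < i)
    (hφ : ∀ n, Titer η j (η j) n ≠ 0) : Titer η i (η j) = 0 := by
  induction i, hji using Nat.le_induction with
  | base => rw [Titer_succ, Td_self hφ]
  | succ i _ ih => rw [Titer_succ, ih, Td_zero]

/-- The difference operator `Δ` as a linear endomorphism, so that polynomials in `Δ` can be
formed with `Polynomial.aeval`. -/
def deltaEnd : Module.End ℝ (ℤ → ℝ) where
  toFun := deltaOp
  map_add' f g := by
    ext n
    simp only [deltaOp, Pi.add_apply]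
    ring
  map_smul' c f := by
    ext n
    simp only [deltaOp, Pi.smul_apply, smul_eq_mul, RingHom.id_apply]
    ring

lemma deltaEnd_pow_apply (l : ℕ) (f : ℤ → ℝ) : (deltaEnd ^ l) f = deltaOp^[l] f :=
  Module.End.pow_apply deltaEnd l f

lemma aeval_deltaEnd_apply_add_one (p : ℝ[X]) (f : ℤ → ℝ) (n : ℤ) :
    aeval deltaEnd p f (n + 1) = aeval deltaEnd ((X + 1) * p) f n := by
  have hΔ : aeval deltaEnd ((X + 1) * p) f =
      deltaOp (aeval deltaEnd p f) + aeval deltaEnd p f := by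
    simp only [map_mul, map_add, aeval_X, map_one, Module.End.mul_apply, LinearMap.add_apply,
      Module.End.one_apply]
    rfl
  rw [hΔ, Pi.add_apply, deltaOp, sub_add_cancel]

lemma aeval_deltaEnd_apply_eq_sum {p : ℝ[X]} {k : ℕ} (hp : p.natDegree < k) (f : ℤ → ℝ) (n : ℤ) :
    aeval deltaEnd p f n = ∑ l : Fin k, p.coeff l * deltaOp^[l] f n := by
  rw [aeval_endomorphism, p.sum_over_range' (by simp) k hp, Finset.sum_apply,
    ← Fin.sum_univ_eq_sum_range (fun l => (p.coeff l • (deltaEnd ^ l) f) n)]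
  simp only [Pi.smul_apply, smul_eq_mul, deltaEnd_pow_apply]

/-- `T` is a monic difference operator of order `k`, that is `T = Δᵏ + ∑ l < k, aₗ Δˡ` with
coefficients `aₗ : ℤ → ℝ`. The coefficients at `n` are collected in a monic polynomial `p n`
of degree `k`, so that `T f` at `n` is `p n (Δ) f` at `n`. -/
def IsMonicDifferenceOperator (T : (ℤ → ℝ) → ℤ → ℝ) (k : ℕ) : Prop :=
  ∃ p : ℤ → ℝ[X], (∀ n, (p n).Monic) ∧ (∀ n, (p n).natDegree = k) ∧
    ∀ f n, T f n = aeval deltaEnd (p n) f n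

lemma isMonicDifferenceOperator_id : IsMonicDifferenceOperator id 0 :=
  ⟨1, fun _ => monic_one, fun _ => natDegree_one, fun f n => by simp⟩

lemma IsMonicDifferenceOperator.Td_comp {T : (ℤ → ℝ) → ℤ → ℝ} {k : ℕ}
    (hT : IsMonicDifferenceOperator T k) {q : ℤ → ℝ} (hq : ∀ n, q n ≠ 0) :
    IsMonicDifferenceOperator (Td q ∘ T) (k + 1) := by
  obtain ⟨p, hmonic, hdeg, hp⟩ := hT
  have hlead (n : ℤ) : ((X + 1) * p (n + 1)).Monic := (monic_X_add_C 1).mul (hmonic _)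
  have hleadDeg (n : ℤ) : ((X + 1) * p (n + 1)).natDegree = k + 1 := by
    rw [← C_1, (monic_X_add_C 1).natDegree_mul (hmonic _), natDegree_X_add_C, hdeg, add_comm]
  have hlt (n : ℤ) : (C (q (n + 1) / q n) * p n).natDegree < ((X + 1) * p (n + 1)).natDegree :=
    calc (C (q (n + 1) / q n) * p n).natDegree ≤ (p n).natDegree := natDegree_C_mul_le _ _
      _ < ((X + 1) * p (n + 1)).natDegree := by rw [hdeg, hleadDeg]; exact k.lt_succ_self
  refine ⟨fun n => (X + 1) * p (n + 1) - C (q (n + 1) / q n) * p n,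
    fun n => (hlead n).sub_of_left (degree_lt_degree (hlt n)),
    fun n => (natDegree_sub_eq_left_of_natDegree_lt (hlt n)).trans (hleadDeg n), fun f n => ?_⟩
  calc Td q (T f) n = T f (n + 1) - q (n + 1) / q n * T f n := Td_apply_of_ne_zero hq _ _
    _ = aeval deltaEnd ((X + 1) * p (n + 1)) f n
          - q (n + 1) / q n * aeval deltaEnd (p n) f n := by
      rw [hp, hp, aeval_deltaEnd_apply_add_one]
    _ = aeval deltaEnd ((X + 1) * p (n + 1) - C (q (n + 1) / q n) * p n) f n := by
      simp [← smul_eq_C_mul]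

lemma isMonicDifferenceOperator_Titer {η : ℕ → ℤ → ℝ} {i : ℕ}
    (hφ : ∀ j < i, ∀ n, Titer η j (η j) n ≠ 0) : IsMonicDifferenceOperator (Titer η i) i := by
  induction i with
  | zero => exact isMonicDifferenceOperator_id
  | succ i ih => exact (ih fun j hj => hφ j (hj.trans i.lt_succ_self)).Td_comp (hφ i i.lt_succ_self)

lemma det_eq_Wr_of_isMonicDifferenceOperator {m : ℕ} {T : Fin m → (ℤ → ℝ) → ℤ → ℝ}
    (hT : ∀ i, IsMonicDifferenceOperator (T i) i) (f : Fin m → ℤ → ℝ) (n : ℤ) :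
    (Matrix.of fun i j => T i (f j) n).det = Wr f n := by
  choose p hmonic hdeg hp using hT
  set A : Matrix (Fin m) (Fin m) ℝ := Matrix.of fun l i => (p i n).coeff l
  have hA : A.det = 1 :=
    Matrix.det_matrixOfPolynomials (fun i => p i n) (fun i => hdeg i n) (fun i => hmonic i n)
  have hfactor : (Matrix.of fun i j => T i (f j) n) =
      A.transpose * Matrix.of fun i j : Fin m => deltaOp^[i] (f j) n := by
    ext i j
    rw [Matrix.of_apply, hp, aeval_deltaEnd_apply_eq_sum ((hdeg i n).trans_lt i.is_lt)]
    rfl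
  rw [hfactor, Matrix.det_mul, Matrix.det_transpose, hA, one_mul, Wr]

lemma prod_Titer_eq_Wr_of_ne_zero {η : ℕ → ℤ → ℝ} {m : ℕ}
    (hφ : ∀ j, j + 1 < m → ∀ n, Titer η j (η j) n ≠ 0) (n : ℤ) :
    ∏ j ∈ Finset.range m, Titer η j (η j) n = Wr (fun i : Fin m => η i) n := by
  have hmonic (i : Fin m) : IsMonicDifferenceOperator (Titer η i) i :=
    isMonicDifferenceOperator_Titer fun j hj => hφ j (by omega)
  have htriangular : (Matrix.of fun i j : Fin m => Titer η i (η j) n).IsUpperTriangular := by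
    intro i j (hji : j < i)
    exact congrFun (Titer_eq_zero_of_lt hji (hφ j (by omega))) n
  rw [← det_eq_Wr_of_isMonicDifferenceOperator hmonic, Matrix.det_of_isUpperTriangular htriangular]
  exact (Fin.prod_univ_eq_prod_range (fun j => Titer η j (η j) n) m).symm

lemma Titer_ne_zero_of_Wr_ne_zero {η : ℕ → ℤ → ℝ} {j : ℕ}
    (hW : ∀ i ≤ j, ∀ n, Wr (fun l : Fin (i + 1) => η l) n ≠ 0) (n : ℤ) :
    Titer η j (η j) n ≠ 0 := by
  induction j using Nat.strong_induction_on generalizing n with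
  | _ j ih =>
    have hprod : ∏ i ∈ Finset.range (j + 1), Titer η i (η i) n ≠ 0 := by
      rw [prod_Titer_eq_Wr_of_ne_zero fun i hi n =>
        ih i (by omega) (fun l hl => hW l (by omega)) n]
      exact hW j le_rfl n
    exact Finset.prod_ne_zero_iff.mp hprod j (Finset.self_mem_range_succ j)

theorem stmt12_general (m : ℕ) (η : ℕ → ℤ → ℝ)
    (hW : ∀ j : ℕ, 1 ≤ j → j < m → ∀ n : ℤ, Wr (fun i : Fin j => η i) n ≠ 0) (n : ℤ) :
    ∏ j ∈ Finset.range m, Titer η j (η j) n = Wr (fun i : Fin m => η i) n :=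
  prod_Titer_eq_Wr_of_ne_zero
    (fun _ _ => Titer_ne_zero_of_Wr_ne_zero fun i _ => hW (i + 1) i.succ_pos (by omega)) n

/-- The product of the successive transformed eigenfunctions `φ_{j+1} = T_j(η_{j+1})`
equals the Δ-Wronskian: `φ_1·φ_2·…·φ_m = W_m^Δ(η_1,…,η_m)` pointwise. This encodes
the τ-function transformation rule `τ^{(m)}_Δ = W_m^Δ(η_1,…,η_m)·τ_Δ`. -/
theorem stmt12 (m : ℕ) (hm : 1 ≤ m) (η : ℕ → ℤ → ℝ)
    (hW : ∀ j : ℕ, 1 ≤ j → j ≤ m → ∀ n : ℤ, Wr (fun i : Fin j => η i) n ≠ 0) :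
    ∀ n : ℤ,
      ∏ j ∈ Finset.range m, Titer η j (η j) n = Wr (fun i : Fin m => η i) n :=
  stmt12_general m η fun j hj hjm => hW j hj hjm.le
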